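/- For every (m,n)-Dyck path π, the identity of integers h₊(π) − (m−1)(n−1)/2 − Σ_{v ∈ v^*(π)} k(v) = −( Σ_{p ∈ i(π)} k(p) + Σ_{p ∈ v_*(π)} k(p) ) holds. -/

import Mathlib

/-- An `(m,n)`-Dyck path is encoded by the weakly increasing sequence `y 1 ≤ … ≤ y m = n`
of heights of its east steps (with the convention `y 0 = 0`), subject to `m * y c ≥ n * c`.
The north steps of the path are the pairs `(c, j)` with `0 ≤ c < m` and
`y c ≤ j < y (c+1)`, representing the unit north step from `(c, j)` to `(c, j+1)`. -/
def northSteps (m n : ℕ) (y : ℕ → ℕ) : Finset (ℕ × ℕ) :=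
  (Finset.range m ×ˢ Finset.range n).filter fun s => y s.1 ≤ s.2 ∧ s.2 < y (s.1 + 1)

/-- The east steps of the path are indexed by `c` with `1 ≤ c ≤ m`; the east step `c`
goes from `(c-1, y c)` to `(c, y c)`. -/
def eastSteps (m : ℕ) : Finset ℕ := Finset.Icc 1 m

/-- `o(π)`: pairs `(s₁, s₂)` of an east step `s₁` and a north step `s₂` of the path
with `s₁` occurring earlier than (to the left of) `s₂` along the path. -/
def oSet (m n : ℕ) (y : ℕ → ℕ) : Finset (ℕ × ℕ × ℕ) :=
  (eastSteps m ×ˢ northSteps m n y).filter fun p => p.1 ≤ p.2.1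

/-- `i(π)`: lattice points `(a,b)` strictly between the path and the diagonal:
`1 ≤ a ≤ m-1`, `m·b > n·a` and `b < y a`. -/
def iSet (m n : ℕ) (y : ℕ → ℕ) : Finset (ℕ × ℕ) :=
  (Finset.Icc 1 (m - 1) ×ˢ Finset.range n).filter fun p =>
    n * p.1 < m * p.2 ∧ p.2 < y p.1

/-- `k(p)` for a lattice point `p = (a,b)`: the number of north steps of the path whose
interior is intersected by the line through `p` parallel to the diagonal,
`m·(y−b) = n·(x−a)`.  A north step `(c,j)` is intersected iff
`m·j < m·b + n·(c−a) < m·(j+1)`. -/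
def kNum (m n : ℕ) (y : ℕ → ℕ) (p : ℕ × ℕ) : ℕ :=
  ((northSteps m n y).filter fun s =>
    (m : ℤ) * s.2 < (m : ℤ) * p.2 + (n : ℤ) * ((s.1 : ℤ) - (p.1 : ℤ)) ∧
    (m : ℤ) * p.2 + (n : ℤ) * ((s.1 : ℤ) - (p.1 : ℤ)) < (m : ℤ) * ((s.2 : ℤ) + 1)).card

/-- `h₊(π)`: the number of pairs `(s₁, s₂) ∈ o(π)` such that some line parallel to the
diagonal meets the interiors of both steps.  For the east step `s₁ = c₁` (at height
`y c₁`) and the north step `s₂ = (c₂, j)` this overlap condition reads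
`m·(y c₁) − n·c₁ < m·(j+1) − n·c₂` and `m·j − n·c₂ < m·(y c₁) − n·(c₁−1)`. -/
def hplus (m n : ℕ) (y : ℕ → ℕ) : ℕ :=
  ((oSet m n y).filter fun p =>
    (m : ℤ) * (y p.1 : ℤ) - (n : ℤ) * (p.1 : ℤ)
        < (m : ℤ) * ((p.2.2 : ℤ) + 1) - (n : ℤ) * (p.2.1 : ℤ) ∧
    (m : ℤ) * (p.2.2 : ℤ) - (n : ℤ) * (p.2.1 : ℤ)
        < (m : ℤ) * (y p.1 : ℤ) - (n : ℤ) * ((p.1 : ℤ) - 1)).card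

/-- The inner vertices of the path: lattice points at which an east step is immediately
followed by a north step, i.e. points `(c, y c)` with `1 ≤ c ≤ m−1` and `y c < y (c+1)`. -/
def innerV (m n : ℕ) (y : ℕ → ℕ) : Finset (ℕ × ℕ) :=
  (Finset.range (m + 1) ×ˢ Finset.range (n + 1)).filter fun v =>
    1 ≤ v.1 ∧ v.1 ≤ m - 1 ∧ v.2 = y v.1 ∧ y v.1 < y (v.1 + 1)

/-- The outer vertices of the path: lattice points at which a north step is immediately
followed by an east step, i.e. points `(c, y (c+1))` with `0 ≤ c ≤ m−1` and
`y c < y (c+1)`. -/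
def outerV (m n : ℕ) (y : ℕ → ℕ) : Finset (ℕ × ℕ) :=
  (Finset.range (m + 1) ×ˢ Finset.range (n + 1)).filter fun v =>
    v.1 ≤ m - 1 ∧ v.2 = y (v.1 + 1) ∧ y v.1 < y (v.1 + 1)

/-- `v^*(π)`: the outer vertices of the path excluding the (unique) outer vertex most
distant from the diagonal, i.e. those outer vertices `v` for which some outer vertex `w`
satisfies `m·y(w) − n·x(w) > m·y(v) − n·x(v)`. -/
def vstar (m n : ℕ) (y : ℕ → ℕ) : Finset (ℕ × ℕ) :=
  (outerV m n y).filter fun v => ∃ w ∈ outerV m n y,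
    (m : ℤ) * (v.2 : ℤ) - (n : ℤ) * (v.1 : ℤ) < (m : ℤ) * (w.2 : ℤ) - (n : ℤ) * (w.1 : ℤ)

/-!
Measure lattice points by the level `m * b - n * a`. Whether an east step and a north step are
crossed by a common line, and whether a north step is crossed by the line through an end of an east
step, depends only on their order and on the difference of their levels. By coprimality the same
holds for whether a north step is crossed by the line through some point below a given east step. So
the identity is about a sum over all pairs of an east and a north step. The contribution of a pair,
less one if the east step comes first, is up to sign the increment along the north step of a single
function of the level difference. Such increments telescope along the path, so the double sum
reduces to a sum over east steps; together with the number of pairs in which the east step comes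
first it equals `(m - 1) * (n - 1) / 2`.
-/

open Finset

section Arithmetic

theorem two_mul_sum_neg_mul_ediv {m : ℕ} {n : ℤ} (hm : 0 < m) (hcop : IsCoprime (m : ℤ) n) :
    2 * ∑ d ∈ range m, -(n * d) / (m : ℤ) = -((m - 1) * (n + 1)) := by
  obtain ⟨k, rfl⟩ : ∃ k, m = k + 1 := ⟨m - 1, by omega⟩
  have reflect (d : ℕ) (hd : d ∈ range k) :
      -(n * (d + 1 : ℕ)) / ((k + 1 : ℕ) : ℤ) + -(n * (k - 1 - d + 1 : ℕ)) / ((k + 1 : ℕ) : ℤ)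
        = -(n + 1) := by
    have hdk : d < k := mem_range.1 hd
    have hcast : ((k - 1 - d + 1 : ℕ) : ℤ) = (k + 1 : ℕ) - (d + 1 : ℕ) := by omega
    have hndvd : ¬ ((k + 1 : ℕ) : ℤ) ∣ n * (d + 1 : ℕ) := fun h => by
      have := Int.le_of_dvd (by omega) (hcop.dvd_of_dvd_mul_left h)
      omega
    rw [hcast, show -(n * (((k + 1 : ℕ) : ℤ) - (d + 1 : ℕ)))
        = n * (d + 1 : ℕ) + -n * (k + 1 : ℕ) by ring, Int.add_mul_ediv_right _ _ (by omega),
      Int.neg_ediv, if_neg hndvd, Int.sign_eq_one_of_pos (by omega)]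
    ring
  rw [sum_range_succ', two_mul]
  nth_rewrite 2 [← sum_range_reflect]
  simp only [CharP.cast_eq_zero, mul_zero, neg_zero, Int.zero_ediv, add_zero]
  rw [← sum_add_distrib, sum_congr rfl reflect, sum_const, card_range, nsmul_eq_mul]
  push_cast
  ring

/-- The number of integers `k ≥ 0` with `k * m ≤ t`, for `m > 0`. -/
def multiplesUpTo (m : ℕ) (t : ℤ) : ℤ := max 0 (t / m + 1)

variable {m : ℕ} {t : ℤ}

theorem multiplesUpTo_of_neg (hm : 0 < m) (ht : t < 0) : multiplesUpTo m t = 0 :=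
  max_eq_left (Int.ediv_neg_of_neg_of_pos ht (by exact_mod_cast hm))

theorem multiplesUpTo_of_neg_le (hm : 0 < m) (ht : -m ≤ t) : multiplesUpTo m t = t / m + 1 := by
  have : -1 ≤ t / m := (Int.le_ediv_iff_mul_le (by exact_mod_cast hm)).2 (by linarith)
  exact max_eq_right (by linarith)

theorem multiplesUpTo_sub_multiplesUpTo_sub (hm : 0 < m) :
    multiplesUpTo m t - multiplesUpTo m (t - m) = if 0 ≤ t then 1 else 0 := by
  split_ifs with ht
  · rw [multiplesUpTo_of_neg_le hm (by omega), multiplesUpTo_of_neg_le hm (by omega),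
      Int.sub_ediv_of_dvd t dvd_rfl, Int.ediv_self (by omega)]
    ring
  · rw [multiplesUpTo_of_neg hm (by omega), multiplesUpTo_of_neg hm (by omega), sub_zero]

theorem exists_mul_mem_Ioo (hm : 0 < m) (ht : ¬ (m : ℤ) ∣ t) :
    ∃ b : ℤ, t < m * b ∧ m * b < t + m := by
  have hdiv := Int.mul_ediv_add_emod t m
  have hlt := Int.emod_lt_of_pos t (by omega : (0 : ℤ) < m)
  have hne : t % m ≠ 0 := fun h => ht (Int.dvd_of_emod_eq_zero h)
  have hnonneg := Int.emod_nonneg t (by omega : (m : ℤ) ≠ 0)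
  refine ⟨t / m + 1, ?_, ?_⟩ <;> rw [mul_add, mul_one] <;> omega

theorem eq_of_mul_mem_Ioo {b c : ℤ} (hb : t < m * b) (hb' : m * b < t + m)
    (hc : t < m * c) (hc' : m * c < t + m) : b = c := by
  have hbc : (m : ℤ) * b < m * (c + 1) := by linarith
  have hcb : (m : ℤ) * c < m * (b + 1) := by linarith
  have := lt_of_mul_lt_mul_left hbc (Int.natCast_nonneg m)
  have := lt_of_mul_lt_mul_left hcb (Int.natCast_nonneg m)
  omega

end Arithmetic

/-- The encoding of a lattice path from `(0, 0)` to `(m, n)` by the heights of its east steps. -/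
structure IsLatticePath (m n : ℕ) (y : ℕ → ℕ) : Prop where
  zero : y 0 = 0
  le_succ : ∀ c < m, y c ≤ y (c + 1)
  last : y m = n

/-- An `(m, n)`-Dyck path: a lattice path weakly above the diagonal. -/
structure IsDyckPath (m n : ℕ) (y : ℕ → ℕ) : Prop extends IsLatticePath m n y where
  above : ∀ c ≤ m, n * c ≤ m * y c

/-- The level `m * b - n * a` of a lattice point `(a, b)`, a scaled signed distance to the
diagonal: lines parallel to the diagonal are the level sets. The north step starting at `s` spans
the levels from `level m n s` to `level m n s + m`. -/
def level (m n : ℕ) (p : ℕ × ℕ) : ℤ := m * p.2 - n * p.1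

/-- The level of the right end of the east step from `(d, y (d + 1))` to `(d + 1, y (d + 1))`; the
step spans the levels from `eastLevel m n y d` to `eastLevel m n y d + n`. Its index `d` is its
column, one less than its index in `eastSteps`. -/
def eastLevel (m n : ℕ) (y : ℕ → ℕ) (d : ℕ) : ℤ := level m n (d + 1, y (d + 1))

section Level

variable {m n : ℕ} {y : ℕ → ℕ}

theorem level_zero_zero : level m n (0, 0) = 0 := by simp [level]

theorem level_self : level m n (m, n) = 0 := by simp only [level]; ring

theorem level_north (a b : ℕ) : level m n (a, b + 1) = level m n (a, b) + m := by
  simp only [level]; push_cast; ring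

theorem level_east_start (d : ℕ) : level m n (d, y (d + 1)) = eastLevel m n y d + n := by
  simp only [eastLevel, level]; push_cast; ring

theorem level_east_end (d : ℕ) : level m n (d + 1, y (d + 1)) = eastLevel m n y d := rfl

theorem level_mono {a b b' : ℕ} (h : b ≤ b') : level m n (a, b) ≤ level m n (a, b') :=
  sub_le_sub_right (by gcongr) _

theorem mem_northSteps {s : ℕ × ℕ} :
    s ∈ northSteps m n y ↔ (s.1 < m ∧ s.2 < n) ∧ y s.1 ≤ s.2 ∧ s.2 < y (s.1 + 1) := by
  simp [northSteps]

theorem sum_eastSteps {M : Type*} [AddCommMonoid M] (f : ℕ → M) :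
    ∑ c ∈ eastSteps m, f c = ∑ d ∈ range m, f (d + 1) := by
  rw [range_eq_Ico, sum_Ico_add']
  rfl

theorem kNum_eq_sum (p : ℕ × ℕ) :
    (kNum m n y p : ℤ) = ∑ s ∈ northSteps m n y,
      if level m n s < level m n p ∧ level m n p < level m n s + m then 1 else 0 := by
  rw [kNum, card_filter, Nat.cast_sum]
  refine sum_congr rfl fun s _ => ?_
  rw [Nat.cast_ite, Nat.cast_one, Nat.cast_zero]
  refine if_congr ?_ rfl rfl
  simp only [level]
  constructor <;> rintro ⟨hlow, hhigh⟩ <;> constructor <;> linarith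

theorem hplus_eq_sum :
    (hplus m n y : ℤ) = ∑ d ∈ range m, ∑ s ∈ northSteps m n y,
      if d < s.1 ∧ eastLevel m n y d < level m n s + m ∧ level m n s < eastLevel m n y d + n
      then 1 else 0 := by
  rw [hplus, oSet, filter_filter, card_filter, sum_product, sum_eastSteps]
  push_cast
  refine sum_congr rfl fun d _ => sum_congr rfl fun s _ => if_congr ?_ rfl rfl
  simp only [eastLevel, level, Nat.succ_le_iff]
  push_cast
  refine and_congr_right fun _ => ?_
  constructor <;> rintro ⟨hlow, hhigh⟩ <;> constructor <;> linarith

end Level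

namespace IsLatticePath

variable {m n : ℕ} {y : ℕ → ℕ}

theorem le_height (h : IsLatticePath m n y) {c : ℕ} (hc : c ≤ m) : y c ≤ n := by
  induction hc using Nat.decreasingInduction with
  | self => exact h.last.le
  | of_succ c hc ih => exact (h.le_succ c hc).trans ih

theorem sum_northSteps_lt {M : Type*} [AddCommMonoid M] (h : IsLatticePath m n y) {c : ℕ}
    (hc : c ≤ m) (f : ℕ × ℕ → M) :
    ∑ s ∈ northSteps m n y with s.1 < c, f s
      = ∑ a ∈ range c, ∑ b ∈ Ico (y a) (y (a + 1)), f (a, b) := by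
  refine sum_finset_product _ _ _ fun s => ?_
  simp only [mem_filter, mem_northSteps, mem_range, mem_Ico]
  refine ⟨fun hs => ⟨hs.2, hs.1.2⟩, fun hs => ⟨⟨⟨hs.1.trans_le hc, ?_⟩, hs.2⟩, hs.1⟩⟩
  exact hs.2.2.trans_le (h.le_height (Nat.succ_le_of_lt (hs.1.trans_le hc)))

section Telescoping

variable {M : Type*} [AddCommGroup M]

theorem sum_steps (h : IsLatticePath m n y) {c : ℕ} (hc : c ≤ m) (φ : ℕ × ℕ → M) :
    ∑ s ∈ northSteps m n y with s.1 < c, (φ (s.1, s.2 + 1) - φ s)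
      + ∑ d ∈ range c, (φ (d + 1, y (d + 1)) - φ (d, y (d + 1))) = φ (c, y c) - φ (0, 0) := by
  have column (a : ℕ) (ha : a ∈ range c) :
      ∑ b ∈ Ico (y a) (y (a + 1)), (φ (a, b + 1) - φ (a, b)) = φ (a, y (a + 1)) - φ (a, y a) :=
    sum_Ico_sub (fun b => φ (a, b)) (h.le_succ a ((mem_range.1 ha).trans_le hc))
  rw [h.sum_northSteps_lt hc, sum_congr rfl column, ← sum_add_distrib]
  simp only [sub_add_sub_cancel']
  rw [sum_range_sub (fun a => φ (a, y a)), h.zero]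

theorem sum_level_steps (h : IsLatticePath m n y) {c : ℕ} (hc : c ≤ m) (F : ℤ → M) :
    ∑ s ∈ northSteps m n y with s.1 < c, (F (level m n s + m) - F (level m n s))
      + ∑ d ∈ range c, (F (eastLevel m n y d) - F (eastLevel m n y d + n))
      = F (level m n (c, y c)) - F 0 := by
  simpa only [level_north, level_east_start, level_zero_zero, level_east_end, Prod.mk.eta] using
    h.sum_steps hc fun p => F (level m n p)

theorem sum_level_steps_before (h : IsLatticePath m n y) {d : ℕ} (hd : d < m) (F : ℤ → M) :
    ∑ s ∈ northSteps m n y with ¬ d < s.1, (F (level m n s + m) - F (level m n s))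
      + ∑ e ∈ range d, (F (eastLevel m n y e) - F (eastLevel m n y e + n))
      = F (eastLevel m n y d + n) - F 0 := by
  have := h.sum_level_steps hd F
  rw [sum_range_succ, ← add_assoc, ← eq_sub_iff_add_eq, ← eastLevel] at this
  simp only [not_lt, ← Nat.lt_succ_iff]
  rw [this]
  abel

theorem sum_level_steps_after (h : IsLatticePath m n y) {d : ℕ} (hd : d < m) (F : ℤ → M) :
    ∑ s ∈ northSteps m n y with d < s.1, (F (level m n s + m) - F (level m n s))
      + ∑ e ∈ Ico (d + 1) m, (F (eastLevel m n y e) - F (eastLevel m n y e + n))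
      = F 0 - F (eastLevel m n y d) := by
  have total := h.sum_level_steps le_rfl F
  have upTo := h.sum_level_steps hd F
  rw [filter_true_of_mem fun s hs => (mem_northSteps.1 hs).1.1, h.last, level_self, sub_self,
    ← sum_range_add_sum_Ico _ (Nat.succ_le_of_lt hd),
    ← sum_filter_not_add_sum_filter _ fun s : ℕ × ℕ => d < s.1] at total
  simp only [Nat.succ_eq_add_one, Nat.lt_succ_iff, not_lt] at total upTo ⊢
  rw [← eastLevel] at upTo
  rw [← sub_eq_zero] at total upTo ⊢
  rw [← sub_eq_zero.2 (total.trans upTo.symm)]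
  abel

/-- Telescope the north steps after, respectively before, each east step. The leftover east–east
terms cancel because `G` is only evaluated at differences of levels. -/
theorem sum_pairs (h : IsLatticePath m n y) (G : ℤ → M) :
    ∑ d ∈ range m, ∑ s ∈ northSteps m n y,
      (if d < s.1 then
        G (level m n s + m - eastLevel m n y d) - G (level m n s - eastLevel m n y d)
      else
        G (eastLevel m n y d + n - level m n s - m) - G (eastLevel m n y d + n - level m n s))
      = ∑ d ∈ range m, (G (-eastLevel m n y d) - G (eastLevel m n y d + n)) := by
  set E := eastLevel m n y
  set A := level m n
  have before := sum_congr rfl fun d hd =>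
    h.sum_level_steps_before (mem_range.1 hd) fun t => G (E d + n - t)
  have after := sum_congr rfl fun d hd =>
    h.sum_level_steps_after (mem_range.1 hd) fun t => G (t - E d)
  rw [sum_add_distrib] at before after
  have east_pairs_cancel :
      ∑ d ∈ range m, ∑ e ∈ range d, (G (E d + n - E e) - G (E d + n - (E e + n)))
        + ∑ d ∈ range m, ∑ e ∈ Ico (d + 1) m, (G (E e - E d) - G (E e + n - E d)) = 0 := by
    rw [sum_comm' (t' := range m) (s' := fun e => Ico (e + 1) m)
      (by simp only [mem_range, mem_Ico]; omega), ← sum_add_distrib]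
    refine sum_eq_zero fun d _ => ?_
    rw [← sum_add_distrib]
    refine sum_eq_zero fun e _ => ?_
    rw [add_sub_add_right_eq_sub]
    abel
  simp only [sum_ite, sum_add_distrib, sub_sub _ _ (m : ℤ)]
  rw [← add_zero (_ + _), ← east_pairs_cancel, add_comm (∑ _ ∈ _, _), add_add_add_comm]
  refine (congrArg₂ (· + ·) before after).trans ?_
  rw [← sum_add_distrib]
  refine sum_congr rfl fun d _ => ?_
  rw [sub_self, sub_self, sub_zero, zero_sub]
  abel

end Telescoping

theorem mem_outerV (h : IsLatticePath m n y) {v : ℕ × ℕ} (hm : 0 < m) :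
    v ∈ outerV m n y ↔ v.1 < m ∧ v.2 = y (v.1 + 1) ∧ y v.1 < y (v.1 + 1) := by
  simp only [outerV, mem_filter, mem_product, mem_range]
  refine ⟨fun hv => ⟨by omega, hv.2.2⟩, fun hv => ?_⟩
  have := h.le_height (c := v.1 + 1) hv.1
  exact ⟨⟨by omega, by omega⟩, by omega, hv.2⟩

theorem mem_innerV (h : IsLatticePath m n y) {v : ℕ × ℕ} :
    v ∈ innerV m n y ↔ (0 < v.1 ∧ v.1 < m) ∧ v.2 = y v.1 ∧ y v.1 < y (v.1 + 1) := by
  simp only [innerV, mem_filter, mem_product, mem_range]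
  refine ⟨fun hv => ⟨by omega, hv.2.2.2⟩, fun hv => ?_⟩
  have := h.le_height hv.1.2.le
  exact ⟨⟨by omega, by omega⟩, by omega, by omega, hv.2⟩

section Vertices

variable {M : Type*} [AddCommGroup M]

theorem sum_outerV (h : IsLatticePath m n y) (hm : 0 < m) (f : ℕ × ℕ → M) :
    ∑ v ∈ outerV m n y, f v = ∑ d ∈ range m with y d < y (d + 1), f (d, y (d + 1)) := by
  have image : outerV m n y = {d ∈ range m | y d < y (d + 1)}.image fun d => (d, y (d + 1)) := by
    ext ⟨a, b⟩
    simp only [h.mem_outerV hm, mem_image, mem_filter, mem_range, Prod.mk.injEq]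
    grind
  rw [image, sum_image fun _ _ _ _ hv => (Prod.mk.inj hv).1]

theorem sum_innerV (h : IsLatticePath m n y) {f : ℕ × ℕ → M} (hf : f (0, 0) = 0) :
    ∑ v ∈ innerV m n y, f v = ∑ d ∈ range m with y d < y (d + 1), f (d, y d) := by
  have image :
      innerV m n y = {d ∈ range m | 0 < d ∧ y d < y (d + 1)}.image fun d => (d, y d) := by
    ext ⟨a, b⟩
    simp only [h.mem_innerV, mem_image, mem_filter, mem_range, Prod.mk.injEq]
    grind
  rw [image, sum_image fun _ _ _ _ hv => (Prod.mk.inj hv).1]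
  refine sum_subset (monotone_filter_right _ fun _ _ hd => hd.2) fun d hd hd' => ?_
  obtain rfl : d = 0 := by grind
  rw [h.zero, hf]

theorem sum_outerV_sub_sum_innerV (h : IsLatticePath m n y) (hm : 0 < m) {f : ℕ × ℕ → M}
    (hf : f (0, 0) = 0) (hf' : f (m, n) = 0) :
    ∑ v ∈ outerV m n y, f v - ∑ v ∈ innerV m n y, f v
      = ∑ d ∈ range m, (f (d, y (d + 1)) - f (d + 1, y (d + 1))) := by
  have jumps : ∑ d ∈ range m with y d < y (d + 1), (f (d, y (d + 1)) - f (d, y d))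
      = ∑ d ∈ range m, (f (d, y (d + 1)) - f (d, y d)) :=
    sum_filter_of_ne fun d hd hne => (h.le_succ d (mem_range.1 hd)).lt_of_ne fun heq =>
      hne (by rw [heq, sub_self])
  have shift : ∑ d ∈ range m, f (d, y d) = ∑ d ∈ range m, f (d + 1, y (d + 1)) := by
    have := sum_range_sub (fun d => f (d, y d)) m
    rw [h.last, h.zero, hf, hf', sub_self, sum_sub_distrib, sub_eq_zero] at this
    exact this.symm
  rw [h.sum_outerV hm, h.sum_innerV hf, ← sum_sub_distrib, jumps, sum_sub_distrib, shift,
    sum_sub_distrib]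

end Vertices

theorem kNum_eq_zero_of_forall_outerV_le (h : IsLatticePath m n y) {p : ℕ × ℕ}
    (hp : ∀ v ∈ outerV m n y, level m n v ≤ level m n p) : kNum m n y p = 0 := by
  rw [← Nat.cast_eq_zero (R := ℤ), kNum_eq_sum]
  refine sum_eq_zero fun s hs => if_neg fun hcross => ?_
  obtain ⟨⟨hcol, -⟩, hlow, hhigh⟩ := mem_northSteps.1 hs
  have top := hp (s.1, y (s.1 + 1))
    ((h.mem_outerV (Nat.zero_lt_of_lt hcol)).2 ⟨hcol, rfl, hlow.trans_lt hhigh⟩)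
  have := level_mono (m := m) (n := n) (a := s.1) (Nat.succ_le_of_lt hhigh)
  rw [Nat.succ_eq_add_one, level_north] at this
  linarith [hcross.2]

theorem sum_kNum_vstar (h : IsLatticePath m n y) :
    ∑ v ∈ vstar m n y, (kNum m n y v : ℤ) = ∑ v ∈ outerV m n y, (kNum m n y v : ℤ) := by
  refine sum_subset (filter_subset _ _) fun v hv hmax => ?_
  refine Nat.cast_eq_zero.2 (h.kNum_eq_zero_of_forall_outerV_le fun w hw => ?_)
  exact not_lt.1 fun hlt => hmax (mem_filter.2 ⟨hv, w, hw, hlt⟩)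

theorem sum_ite_lt_column (h : IsLatticePath m n y) :
    ∑ d ∈ range m, ∑ s ∈ northSteps m n y, (if d < s.1 then 1 else 0)
      = ∑ d ∈ range m, ((n : ℤ) - y (d + 1)) := by
  refine sum_congr rfl fun d hd => ?_
  have total := h.sum_steps le_rfl fun p => (p.2 : ℤ)
  have upTo := h.sum_steps (mem_range.1 hd) fun p => (p.2 : ℤ)
  rw [filter_true_of_mem fun s hs => (mem_northSteps.1 hs).1.1, h.last,
    ← sum_filter_not_add_sum_filter _ fun s : ℕ × ℕ => d < s.1] at total
  simp only [Nat.succ_eq_add_one, Nat.lt_succ_iff, not_lt, Nat.cast_add, Nat.cast_one,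
    add_sub_cancel_left, sub_self, sum_const_zero, add_zero, Nat.cast_zero, sub_zero] at total upTo
  rw [← sum_filter]
  linarith

end IsLatticePath

namespace IsDyckPath

variable {m n : ℕ} {y : ℕ → ℕ}

theorem level_nonneg (h : IsDyckPath m n y) {a b : ℕ} (ha : a ≤ m) (hb : y a ≤ b) :
    0 ≤ level m n (a, b) := by
  have := (h.above a ha).trans (Nat.mul_le_mul_left m hb)
  exact sub_nonneg.2 (by exact_mod_cast this)

theorem level_northStep_nonneg (h : IsDyckPath m n y) {s : ℕ × ℕ} (hs : s ∈ northSteps m n y) :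
    0 ≤ level m n s :=
  h.level_nonneg (mem_northSteps.1 hs).1.1.le (mem_northSteps.1 hs).2.1

theorem kNum_eq_zero_of_level_nonpos (h : IsDyckPath m n y) {p : ℕ × ℕ}
    (hp : level m n p ≤ 0) : kNum m n y p = 0 := by
  rw [← Nat.cast_eq_zero (R := ℤ), kNum_eq_sum]
  exact sum_eq_zero fun s hs => if_neg fun hcross =>
    (hcross.1.trans_le hp).not_ge (h.level_northStep_nonneg hs)

theorem sum_kNum_vstar_sub_sum_kNum_innerV (h : IsDyckPath m n y) (hm : 0 < m) :
    ∑ v ∈ vstar m n y, (kNum m n y v : ℤ) - ∑ v ∈ innerV m n y, (kNum m n y v : ℤ)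
      = ∑ d ∈ range m, ∑ s ∈ northSteps m n y,
        ((if level m n s < eastLevel m n y d + n ∧ eastLevel m n y d + n < level m n s + m
          then 1 else 0)
        - if level m n s < eastLevel m n y d ∧ eastLevel m n y d < level m n s + m
          then 1 else 0) := by
  have kNum_start : (kNum m n y (0, 0) : ℤ) = 0 :=
    Nat.cast_eq_zero.2 (h.kNum_eq_zero_of_level_nonpos level_zero_zero.le)
  have kNum_end : (kNum m n y (m, n) : ℤ) = 0 :=
    Nat.cast_eq_zero.2 (h.kNum_eq_zero_of_level_nonpos level_self.le)
  rw [h.sum_kNum_vstar, h.sum_outerV_sub_sum_innerV hm kNum_start kNum_end]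
  refine sum_congr rfl fun d _ => ?_
  rw [kNum_eq_sum, kNum_eq_sum, level_east_start, level_east_end, ← sum_sub_distrib]

theorem mem_iSet (h : IsDyckPath m n y) {p : ℕ × ℕ} :
    p ∈ iSet m n y ↔ p.1 ∈ eastSteps m ∧ 0 < level m n p ∧ p.2 < y p.1 := by
  have level_pos : 0 < level m n p ↔ n * p.1 < m * p.2 := by
    rw [level, sub_pos]
    exact_mod_cast Iff.rfl
  simp only [iSet, eastSteps, mem_filter, mem_product, mem_Icc, mem_range, level_pos]
  refine ⟨fun hp => ⟨by omega, hp.2⟩, fun ⟨hcol, hpos, hlt⟩ => ?_⟩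
  have hn := hlt.trans_le (h.le_height hcol.2)
  have : p.1 ≠ m := fun heq => by
    rw [heq, mul_comm] at hpos
    exact (lt_of_mul_lt_mul_left hpos (Nat.zero_le m)).not_gt hn
  exact ⟨⟨by omega, hn⟩, hpos, hlt⟩

theorem not_dvd_level_add (h : IsDyckPath m n y) (hcop : IsCoprime (m : ℤ) n) {s : ℕ × ℕ}
    (hs : s ∈ northSteps m n y) {c : ℕ} (hc : c ∈ eastSteps m)
    (hle : level m n s + m ≤ level m n (c, y c)) : ¬ (m : ℤ) ∣ level m n s + n * c := by
  intro hdvd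
  obtain ⟨⟨hcol, -⟩, hlow, -⟩ := mem_northSteps.1 hs
  obtain ⟨hc₁, hcm⟩ := mem_Icc.1 hc
  have hpos : 0 < level m n (c, y c) := by linarith [h.level_northStep_nonneg hs]
  have c_ne_last : c ≠ m := by
    rintro rfl
    rw [h.last, level_self] at hpos
    exact hpos.false
  have c_ne_column : c ≠ s.1 := by
    rintro rfl
    have : level m n (s.1, y s.1) ≤ level m n s := level_mono hlow
    omega
  have hdvd' : (m : ℤ) ∣ n * (c - s.1) := by
    rw [show (n : ℤ) * (c - s.1) = level m n s + n * c - m * s.2 by simp only [level]; ring]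
    exact hdvd.sub (dvd_mul_right _ _)
  have := Int.eq_zero_of_abs_lt_dvd (hcop.dvd_of_dvd_mul_left hdvd') (by rw [abs_lt]; omega)
  omega

/-- A column has exactly one point with level in the strip; it lies below the path if and only if
the top of the path over that column is above the strip. -/
theorem card_iSet_strip (h : IsDyckPath m n y) (hcop : IsCoprime (m : ℤ) n) {s : ℕ × ℕ}
    (hs : s ∈ northSteps m n y) :
    #{p ∈ iSet m n y | level m n s < level m n p ∧ level m n p < level m n s + m}
      = #{c ∈ eastSteps m | level m n s + m ≤ level m n (c, y c)} := by
  have hA := h.level_northStep_nonneg hs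
  refine card_bij (fun p _ => p.1) (fun p hp => ?_) (fun p hp q hq hpq => ?_) fun c hc => ?_
  · obtain ⟨hp, hlow, -⟩ := mem_filter.1 hp
    obtain ⟨hcol, -, hlt⟩ := h.mem_iSet.1 hp
    have := level_mono (m := m) (n := n) (a := p.1) (Nat.succ_le_of_lt hlt)
    rw [Nat.succ_eq_add_one, level_north] at this
    exact mem_filter.2 ⟨hcol, by linarith⟩
  · obtain ⟨-, hp, hp'⟩ := mem_filter.1 hp
    obtain ⟨-, hq, hq'⟩ := mem_filter.1 hq
    simp only [level] at hp hp' hq hq'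
    rw [← hpq] at hq hq'
    refine Prod.ext hpq (Nat.cast_injective (R := ℤ) ?_)
    apply eq_of_mul_mem_Ioo (m := m) (t := m * s.2 - n * s.1 + n * p.1) <;> linarith
  · obtain ⟨hc, hle⟩ := mem_filter.1 hc
    have hm : 0 < m := (mem_Icc.1 hc).1.trans (mem_Icc.1 hc).2
    obtain ⟨b, hlow, hhigh⟩ := exists_mul_mem_Ioo hm (h.not_dvd_level_add hcop hs hc hle)
    have hb : 0 ≤ b := by
      have : (m : ℤ) * 0 < m * b := by rw [mul_zero]; exact lt_of_le_of_lt (by positivity) hlow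
      exact (lt_of_mul_lt_mul_left this (Int.natCast_nonneg m)).le
    lift b to ℕ using hb
    have hlow' : level m n s < level m n (c, b) := lt_sub_iff_add_lt.2 hlow
    have hhigh' : level m n (c, b) < level m n s + m :=
      sub_lt_iff_lt_add.2 (hhigh.trans_eq (by ring))
    have hby : b < y c := not_le.1 fun hyb => (hhigh'.trans_le hle).not_ge (level_mono hyb)
    exact ⟨(c, b),
      mem_filter.2 ⟨h.mem_iSet.2 ⟨hc, hA.trans_lt hlow', hby⟩, hlow', hhigh'⟩, rfl⟩

theorem sum_kNum_iSet (h : IsDyckPath m n y) (hcop : IsCoprime (m : ℤ) n) :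
    ∑ p ∈ iSet m n y, (kNum m n y p : ℤ) = ∑ d ∈ range m, ∑ s ∈ northSteps m n y,
      if level m n s + m ≤ eastLevel m n y d then 1 else 0 := by
  simp only [kNum_eq_sum]
  rw [sum_comm, sum_comm (s := range m)]
  refine sum_congr rfl fun s hs => ?_
  have := h.card_iSet_strip hcop hs
  rw [card_filter, card_filter, sum_eastSteps] at this
  exact_mod_cast this

end IsDyckPath

section PairPotential

variable {m n : ℕ}

/-- The solution of the difference equation `pairPotential_sub` that vanishes on `t ≤ 0`. Its
differences, at the differences of levels of an east and a north step, count how that pair enters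
the identity. -/
def pairPotential (m n : ℕ) (t : ℤ) : ℤ :=
  multiplesUpTo m (t - 1) - multiplesUpTo m (t - 1 - n) - multiplesUpTo m (t - m)

theorem pairPotential_sub (hm : 0 < m) (t : ℤ) :
    pairPotential m n t - pairPotential m n (t - m)
      = (if 0 < t then 1 else 0) - (if n < t then 1 else 0) - if m ≤ t then 1 else 0 := by
  have antidifference {u v : ℤ} {P : Prop} [Decidable P] (hv : u - m = v) (hP : 0 ≤ u ↔ P) :
      multiplesUpTo m u - multiplesUpTo m v = if P then 1 else 0 := by
    rw [← hv, multiplesUpTo_sub_multiplesUpTo_sub hm]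
    exact if_congr hP rfl rfl
  rw [← antidifference (show t - 1 - m = t - m - 1 by ring) (by omega),
    ← antidifference (show t - 1 - n - m = t - m - 1 - n by ring) (by omega),
    ← antidifference (show t - m - m = t - m - m from rfl) (by omega)]
  unfold pairPotential
  ring

theorem pairPotential_of_nonpos (hm : 0 < m) {t : ℤ} (ht : t ≤ 0) : pairPotential m n t = 0 := by
  rw [pairPotential, multiplesUpTo_of_neg hm (by omega), multiplesUpTo_of_neg hm (by omega),
    multiplesUpTo_of_neg hm (by omega), sub_zero, sub_zero]

theorem pairPotential_add (hm : 0 < m) {t : ℤ} (ht : 0 ≤ t) :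
    pairPotential m n (t + n) = (t + n - 1) / m - (t - 1) / m - (t + n) / m := by
  rw [pairPotential, multiplesUpTo_of_neg_le hm (by omega), multiplesUpTo_of_neg_le hm (by omega),
    multiplesUpTo_of_neg_le hm (by omega), Int.sub_ediv_of_dvd _ dvd_rfl,
    Int.ediv_self (by omega), show t + n - 1 - n = t - 1 by ring]
  ring

theorem pair_crossings_eq (hm : 0 < m) (a e : ℤ) (P : Prop) [Decidable P] :
    (if P ∧ e < a + m ∧ a < e + n then 1 else 0) + (if a + m ≤ e then 1 else 0)
        - ((if a < e + n ∧ e + n < a + m then 1 else 0) - if a < e ∧ e < a + m then 1 else 0)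
      = (if P then 1 else 0)
        + if P then pairPotential m n (a + m - e) - pairPotential m n (a - e)
          else pairPotential m n (e + n - a - m) - pairPotential m n (e + n - a) := by
  have east_first := pairPotential_sub (n := n) hm (a + m - e)
  have north_first := pairPotential_sub (n := n) hm (e + n - a)
  rw [show a + m - e - m = a - e by ring] at east_first
  by_cases hP : P
  · simp only [hP, true_and, if_true, east_first]
    split_ifs <;> omega
  · rw [← neg_sub] at north_first
    simp only [hP, false_and, if_false, neg_eq_iff_eq_neg.1 north_first]
    split_ifs <;> omega

end PairPotential

namespace IsDyckPath

variable {m n : ℕ} {y : ℕ → ℕ}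

theorem sum_pairPotential (h : IsDyckPath m n y) (hm : 0 < m) :
    ∑ d ∈ range m, ((n : ℤ) - y (d + 1)) + ∑ d ∈ range m,
        (pairPotential m n (-eastLevel m n y d) - pairPotential m n (eastLevel m n y d + n))
      = (m - 1) * n + ∑ d ∈ range m, -(n * d : ℤ) / m := by
  have hm' : (m : ℤ) ≠ 0 := by omega
  let f (d : ℕ) : ℤ := (-(n * d : ℤ) - 1) / m
  have term (d : ℕ) (hd : d ∈ range m) :
      ((n : ℤ) - y (d + 1)) + (pairPotential m n (-eastLevel m n y d)
        - pairPotential m n (eastLevel m n y d + n))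
      = f (d + 1) - f d + (n + -(n * d : ℤ) / m) := by
    have hE : 0 ≤ eastLevel m n y d := h.level_nonneg (mem_range.1 hd) le_rfl
    rw [pairPotential_of_nonpos hm (neg_nonpos.2 hE), pairPotential_add hm hE]
    have start : eastLevel m n y d + n = -(n * d : ℤ) + y (d + 1) * m := by
      simp only [eastLevel, level]; push_cast; ring
    have pred_end : eastLevel m n y d - 1 = -(n * (d + 1 : ℕ) : ℤ) - 1 + y (d + 1) * m := by
      simp only [eastLevel, level]; ring
    rw [pred_end, start, add_sub_right_comm, Int.add_mul_ediv_right _ _ hm',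
      Int.add_mul_ediv_right _ _ hm', Int.add_mul_ediv_right _ _ hm']
    ring
  have endpoints : f m - f 0 = -n := by
    simp only [f]
    rw [show -(n * m : ℤ) - 1 = -(n * (0 : ℕ)) - 1 + -n * m by push_cast; ring,
      Int.add_mul_ediv_right _ _ hm']
    ring
  rw [← sum_add_distrib, sum_congr rfl term, sum_add_distrib, sum_range_sub, endpoints,
    sum_add_distrib, sum_const, card_range, nsmul_eq_mul]
  ring

theorem sum_crossings (h : IsDyckPath m n y) (hm : 0 < m) (hcop : IsCoprime (m : ℤ) n) :
    (hplus m n y : ℤ) + ∑ p ∈ iSet m n y, (kNum m n y p : ℤ)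
        - (∑ v ∈ vstar m n y, (kNum m n y v : ℤ) - ∑ v ∈ innerV m n y, (kNum m n y v : ℤ))
      = (m - 1) * n + ∑ d ∈ range m, -(n * d : ℤ) / m := by
  rw [hplus_eq_sum, h.sum_kNum_iSet hcop, h.sum_kNum_vstar_sub_sum_kNum_innerV hm]
  simp only [← sum_add_distrib, ← sum_sub_distrib, pair_crossings_eq hm]
  simp only [sum_add_distrib]
  rw [h.sum_ite_lt_column, h.sum_pairs, h.sum_pairPotential hm]

end IsDyckPath

/-- For every `(m,n)`-Dyck path `π`, the identity of integers
`h₊(π) − (m−1)(n−1)/2 − Σ_{v ∈ v^*(π)} k(v) = −(Σ_{p ∈ i(π)} k(p) + Σ_{p ∈ v_*(π)} k(p))`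
holds. -/
theorem hplus_identity (m n : ℕ) (hm : 0 < m) (hn : 0 < n)
    (hcop : Nat.Coprime m n) (y : ℕ → ℕ) (hy0 : y 0 = 0)
    (hmono : ∀ c < m, y c ≤ y (c + 1)) (hym : y m = n)
    (habove : ∀ c, 1 ≤ c → c ≤ m → n * c ≤ m * y c) :
    (hplus m n y : ℤ) - (((m - 1) * (n - 1) / 2 : ℕ) : ℤ)
        - ∑ v ∈ vstar m n y, (kNum m n y v : ℤ)
      = -(∑ p ∈ iSet m n y, (kNum m n y p : ℤ)
          + ∑ p ∈ innerV m n y, (kNum m n y p : ℤ)) := by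
  have path : IsDyckPath m n y :=
    { zero := hy0
      le_succ := hmono
      last := hym
      above := fun c hc => c.eq_zero_or_pos.elim (fun h => by simp [h]) fun h => habove c h hc }
  have hcop' : IsCoprime (m : ℤ) n := Nat.isCoprime_iff_coprime.2 hcop
  have crossings := path.sum_crossings hm hcop'
  have floors := two_mul_sum_neg_mul_ediv hm hcop'
  have count : (((m - 1) * (n - 1) : ℕ) : ℤ) = (m - 1) * (n - 1) := by
    rw [Nat.cast_mul, Nat.cast_pred hm, Nat.cast_pred hn]
  have half : (((m - 1) * (n - 1) / 2 : ℕ) : ℤ)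
      = (m - 1) * n + ∑ d ∈ range m, -(n * d : ℤ) / m := by
    rw [Int.natCast_div, count]
    exact Int.ediv_eq_of_eq_mul_right two_ne_zero (by linear_combination -floors)
  linarith
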